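/- Let B = diag(b₁,...,bₙ) and κ ∈ ℝ. Suppose X, P : ℝ → M_{n,r}(ℝ) are differentiable curves which at time t satisfy XᵀX = I_r, XᵀP = 0, PᵀX = 0, and the equations X' = P - (1+2κ)XPᵀX, P' = (1+2κ)PXᵀP - B²X + 2BXXᵀBX + XΛ with Λ = XᵀB²X - 2XᵀBXXᵀBX - PᵀP. Then for every λ ∈ ℝ, at time t one has d/dt L(λ) = [L(λ), A(λ)], where L(λ) = (I_n - 2XXᵀ)B(I_n - 2XXᵀ) + 2λΦ + λ²B, A(λ) = -2Φ - λB, and Φ = PXᵀ - XPᵀ. (Lax representation with spectral parameter of the fourth-degree potential system on the invariant set Ψ⁻¹(0).) -/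

import Mathlib

/-!
Write `S = 1 - 2XXᵀ` and `Φ = PXᵀ - XPᵀ`. On the invariant set `Φ` anticommutes with `S`, and
`X' = P` reads `S' = 2ΦS`; hence `(SBS)' = [2Φ, SBS]`. The force is such that `2Φ' = [B, SBS]`, the
multiplier term `XΛ` contributing nothing because `Λ` is symmetric. These two equations are the
coefficients of `λ⁰` and `λ¹` in the Lax equation; those of `λ²` and `λ³` vanish identically.
-/

open Matrix

/-- Entrywise derivative of a matrix-valued curve. -/
def HasMatDerivAt {m k : Type*} {E : Type*} [NormedAddCommGroup E] [NormedSpace ℝ E]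
    (F : ℝ → Matrix m k E) (F' : Matrix m k E) (t : ℝ) : Prop :=
  ∀ i j, HasDerivAt (fun s => F s i j) (F' i j) t

/-- The Lax matrix `L(λ) = (I - 2XXᵀ)B(I - 2XXᵀ) + 2λΦ + λ²B` of the system with
the fourth-degree potential, where `Φ = PXᵀ - XPᵀ`. -/
def quarticLax {n r : ℕ} (B : Matrix (Fin n) (Fin n) ℝ)
    (X P : Matrix (Fin n) (Fin r) ℝ) (lam : ℝ) : Matrix (Fin n) (Fin n) ℝ :=
  (1 - (2 : ℝ) • (X * Xᵀ)) * B * (1 - (2 : ℝ) • (X * Xᵀ))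
    + (2 * lam) • (P * Xᵀ - X * Pᵀ) + (lam ^ 2) • B

/-- The matrix `A(λ) = -2Φ - λB` of the Lax pair. -/
def quarticLaxA {n r : ℕ} (B : Matrix (Fin n) (Fin n) ℝ)
    (X P : Matrix (Fin n) (Fin r) ℝ) (lam : ℝ) : Matrix (Fin n) (Fin n) ℝ :=
  -((2 : ℝ) • (P * Xᵀ - X * Pᵀ)) - lam • B

namespace HasMatDerivAt

section Module

variable {m k E : Type*} [NormedAddCommGroup E] [NormedSpace ℝ E]
  {F G : ℝ → Matrix m k E} {F' G' : Matrix m k E} {t : ℝ}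

protected theorem const (C : Matrix m k E) (t : ℝ) : HasMatDerivAt (fun _ => C) 0 t :=
  fun i j => hasDerivAt_const t (C i j)

protected theorem transpose (hF : HasMatDerivAt F F' t) :
    HasMatDerivAt (fun s => (F s)ᵀ) F'ᵀ t :=
  fun i j => hF j i

protected theorem add (hF : HasMatDerivAt F F' t) (hG : HasMatDerivAt G G' t) :
    HasMatDerivAt (fun s => F s + G s) (F' + G') t :=
  fun i j => (hF i j).add (hG i j)

protected theorem sub (hF : HasMatDerivAt F F' t) (hG : HasMatDerivAt G G' t) :
    HasMatDerivAt (fun s => F s - G s) (F' - G') t :=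
  fun i j => (hF i j).sub (hG i j)

protected theorem const_smul (c : ℝ) (hF : HasMatDerivAt F F' t) :
    HasMatDerivAt (fun s => c • F s) (c • F') t :=
  fun i j => (hF i j).const_smul c

end Module

section Ring

variable {m k l A : Type*} [NormedRing A] [NormedAlgebra ℝ A] {t : ℝ}

protected theorem mul [Fintype k] {F : ℝ → Matrix m k A} {F' : Matrix m k A}
    {G : ℝ → Matrix k l A} {G' : Matrix k l A}
    (hF : HasMatDerivAt F F' t) (hG : HasMatDerivAt G G' t) :
    HasMatDerivAt (fun s => F s * G s) (F' * G t + F t * G') t := by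
  intro i j
  simp only [Matrix.mul_apply, Matrix.add_apply, ← Finset.sum_add_distrib]
  exact HasDerivAt.fun_sum fun x _ => (hF i x).mul (hG x j)

theorem mul_const_mul_of_anticomm [Fintype m] {S : ℝ → Matrix m m A}
    {K : Matrix m m A} (C : Matrix m m A) (hS : HasMatDerivAt S (K * S t) t)
    (hK : K * S t = -(S t * K)) :
    HasMatDerivAt (fun s => S s * C * S s) ⁅K, S t * C * S t⁆ t := by
  convert (hS.mul (.const C t)).mul hS using 1
  calc ⁅K, S t * C * S t⁆ = K * S t * C * S t + S t * C * -(S t * K) := by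
        simp only [Ring.lie_def, Matrix.mul_assoc, Matrix.mul_neg, sub_eq_add_neg]
    _ = (K * S t * C + S t * 0) * S t + S t * C * (K * S t) := by
        rw [← hK, Matrix.mul_zero, add_zero]

end Ring

end HasMatDerivAt

section MatrixIdentities

variable {m k R : Type*} [Fintype k] [CommRing R]

/-- The matrix `1 - 2XXᵀ`; for `XᵀX = 1` it is the reflection in the orthogonal complement of the
column space of `X`. -/
def stiefelReflection [DecidableEq m] (X : Matrix m k R) : Matrix m m R :=
  1 - (2 : R) • (X * Xᵀ)

/-- The `SO(n)`-momentum `Φ = PXᵀ - XPᵀ`. -/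
def stiefelMomentum (X P : Matrix m k R) : Matrix m m R :=
  P * Xᵀ - X * Pᵀ

theorem stiefelMomentum_self (X : Matrix m k R) : stiefelMomentum X X = 0 :=
  sub_self _

variable [Fintype m]

/-- The right-hand side of the equation for `P'` on the invariant set, with the multiplier `Λ` of
the constraint `XᵀX = 1` left arbitrary. -/
def quarticForce (B : Matrix m m R) (X : Matrix m k R) (Λ : Matrix k k R) : Matrix m k R :=
  -(B * B * X) + (2 : R) • (B * X * (Xᵀ * B * X)) + X * Λ

theorem stiefelMomentum_quarticForce {B : Matrix m m R} (hB : B.IsSymm)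
    (X : Matrix m k R) {Λ : Matrix k k R} (hΛ : Λ.IsSymm) :
    stiefelMomentum X (quarticForce B X Λ)
      = X * Xᵀ * (B * B) - B * B * (X * Xᵀ)
        + (2 : R) • (B * (X * Xᵀ) * (B * (X * Xᵀ)) - X * Xᵀ * B * (X * Xᵀ * B)) := by
  simp only [stiefelMomentum, quarticForce, transpose_add, transpose_neg, transpose_smul,
    transpose_mul, transpose_transpose, hB.eq, hΛ.eq, Matrix.mul_add, Matrix.add_mul,
    Matrix.mul_neg, Matrix.neg_mul, Matrix.mul_smul, Matrix.smul_mul, Matrix.mul_assoc]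
  module

theorem isSymm_quarticMultiplier {B : Matrix m m R} (hB : B.IsSymm) (X P : Matrix m k R) :
    (Xᵀ * (B * B) * X - (2 : R) • (Xᵀ * B * X * (Xᵀ * B * X)) - Pᵀ * P).IsSymm := by
  simp only [Matrix.IsSymm, transpose_sub, transpose_smul, transpose_mul, transpose_transpose,
    hB.eq, Matrix.mul_assoc]

variable [DecidableEq m]

theorem stiefelMomentum_mul_stiefelReflection {X P : Matrix m k R}
    (hX : X * Xᵀ * X = X) (hXP : Xᵀ * P = 0) :
    stiefelMomentum X P * stiefelReflection X = -(P * Xᵀ + X * Pᵀ) := by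
  have hX' : Xᵀ * (X * Xᵀ) = Xᵀ := by simpa using congrArg transpose hX
  have hPX : Pᵀ * X = 0 := by simpa using congrArg transpose hXP
  have hΦQ : stiefelMomentum X P * (X * Xᵀ) = P * Xᵀ := by
    rw [stiefelMomentum, Matrix.sub_mul, Matrix.mul_assoc P, hX', Matrix.mul_assoc X,
      ← Matrix.mul_assoc Pᵀ, hPX, Matrix.zero_mul, Matrix.mul_zero, sub_zero]
  rw [stiefelReflection, Matrix.mul_sub, Matrix.mul_one, Matrix.mul_smul, hΦQ, stiefelMomentum]
  module

theorem stiefelMomentum_mul_stiefelReflection_anticomm {X P : Matrix m k R}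
    (hX : X * Xᵀ * X = X) (hXP : Xᵀ * P = 0) :
    stiefelMomentum X P * stiefelReflection X = -(stiefelReflection X * stiefelMomentum X P) := by
  have hS : (stiefelReflection X)ᵀ = stiefelReflection X := by simp [stiefelReflection]
  have hΦ : (stiefelMomentum X P)ᵀ = -stiefelMomentum X P := by simp [stiefelMomentum]
  have hΦS := stiefelMomentum_mul_stiefelReflection hX hXP
  calc stiefelMomentum X P * stiefelReflection X
      = (stiefelMomentum X P * stiefelReflection X)ᵀ := by simp [hΦS, add_comm]
    _ = -(stiefelReflection X * stiefelMomentum X P) := by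
        rw [transpose_mul, hS, hΦ, Matrix.mul_neg]

theorem two_smul_stiefelMomentum_quarticForce {B : Matrix m m R} (hB : B.IsSymm)
    (X : Matrix m k R) {Λ : Matrix k k R} (hΛ : Λ.IsSymm) :
    (2 : R) • stiefelMomentum X (quarticForce B X Λ)
      = ⁅B, stiefelReflection X * B * stiefelReflection X⁆ := by
  rw [stiefelMomentum_quarticForce hB X hΛ, stiefelReflection]
  generalize X * Xᵀ = Q
  simp only [Ring.lie_def, Matrix.mul_sub, Matrix.sub_mul, Matrix.mul_smul, Matrix.smul_mul,
    Matrix.mul_one, Matrix.one_mul, Matrix.mul_assoc]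
  module

end MatrixIdentities

theorem lie_quadratic_pencil {R L : Type*} [CommRing R] [LieRing L] [LieAlgebra R L]
    (U F B : L) (c : R) :
    ⁅U + (2 * c) • F + c ^ 2 • B, -((2 : R) • F) - c • B⁆
      = ⁅(2 : R) • F, U⁆ + c • ⁅B, U⁆ := by
  simp only [add_lie, lie_sub, lie_neg, lie_smul, smul_lie, lie_self]
  rw [← lie_skew U F, ← lie_skew U B, ← lie_skew F B]
  module

theorem quarticLax_commutator {n r : ℕ} (B : Matrix (Fin n) (Fin n) ℝ)
    (X P : Matrix (Fin n) (Fin r) ℝ) (lam : ℝ) :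
    quarticLax B X P lam * quarticLaxA B X P lam - quarticLaxA B X P lam * quarticLax B X P lam
      = ⁅(2 : ℝ) • stiefelMomentum X P, stiefelReflection X * B * stiefelReflection X⁆
        + lam • ⁅B, stiefelReflection X * B * stiefelReflection X⁆ :=
  letI := LieRing.ofAssociativeRing (A := Matrix (Fin n) (Fin n) ℝ)
  lie_quadratic_pencil _ (stiefelMomentum X P) B lam

namespace HasMatDerivAt

variable {m k : Type*} [Fintype k] {X P : ℝ → Matrix m k ℝ} {X' P' : Matrix m k ℝ} {t : ℝ}

protected theorem stiefelReflection [DecidableEq m] (hX : HasMatDerivAt X X' t) :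
    HasMatDerivAt (fun s => stiefelReflection (X s))
      (-((2 : ℝ) • (X' * (X t)ᵀ + X t * X'ᵀ))) t := by
  rw [← zero_sub]
  exact (HasMatDerivAt.const 1 t).sub ((hX.mul hX.transpose).const_smul 2)

protected theorem stiefelMomentum (hX : HasMatDerivAt X X' t) (hP : HasMatDerivAt P P' t) :
    HasMatDerivAt (fun s => stiefelMomentum (X s) (P s))
      (stiefelMomentum X' (P t) + stiefelMomentum (X t) P') t := by
  have hbilin : stiefelMomentum X' (P t) + stiefelMomentum (X t) P'
      = P' * (X t)ᵀ + P t * X'ᵀ - (X' * (P t)ᵀ + X t * P'ᵀ) := by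
    simp only [stiefelMomentum]
    abel
  rw [hbilin]
  exact (hP.mul hX.transpose).sub (hX.mul hP.transpose)

theorem stiefelReflection_conj [Fintype m] [DecidableEq m] (B : Matrix m m ℝ)
    (hX : HasMatDerivAt X (P t) t) (hXX : X t * (X t)ᵀ * X t = X t) (hXP : (X t)ᵀ * P t = 0) :
    HasMatDerivAt (fun s => stiefelReflection (X s) * B * stiefelReflection (X s))
      ⁅(2 : ℝ) • stiefelMomentum (X t) (P t),
        stiefelReflection (X t) * B * stiefelReflection (X t)⁆ t := by
  refine mul_const_mul_of_anticomm B ?_ ?_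
  · rw [Matrix.smul_mul, stiefelMomentum_mul_stiefelReflection hXX hXP, smul_neg]
    exact hX.stiefelReflection
  · rw [Matrix.smul_mul, stiefelMomentum_mul_stiefelReflection_anticomm hXX hXP, smul_neg,
      Matrix.mul_smul]

end HasMatDerivAt

theorem fourth_degree_lax_representation_general (n r : ℕ)
    (B : Matrix (Fin n) (Fin n) ℝ) (hB : B.IsSymm) (κ : ℝ)
    (X P : ℝ → Matrix (Fin n) (Fin r) ℝ)
    (X' P' : Matrix (Fin n) (Fin r) ℝ) (t : ℝ)
    (hX : HasMatDerivAt X X' t) (hP : HasMatDerivAt P P' t)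
    (hXX : X t * (X t)ᵀ * X t = X t) (hXP : (X t)ᵀ * P t = 0)
    (Λ : Matrix (Fin r) (Fin r) ℝ) (hΛ : Λ.IsSymm)
    (heqX : X' = P t - (1 + 2 * κ) • (X t * ((P t)ᵀ * X t)))
    (heqP : P' = (1 + 2 * κ) • (P t * ((X t)ᵀ * P t)) - B * B * X t
        + (2 : ℝ) • (B * X t * ((X t)ᵀ * B * X t)) + X t * Λ) :
    ∀ lam : ℝ,
      HasMatDerivAt (fun s => quarticLax B (X s) (P s) lam)
        (quarticLax B (X t) (P t) lam * quarticLaxA B (X t) (P t) lam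
          - quarticLaxA B (X t) (P t) lam * quarticLax B (X t) (P t) lam) t := by
  intro lam
  have hPX : (P t)ᵀ * X t = 0 := by simpa using congrArg transpose hXP
  obtain rfl : X' = P t := by simp [heqX, hPX]
  obtain rfl : P' = quarticForce B (X t) Λ := by simp [heqP, hXP, quarticForce]
  have hΦ : HasMatDerivAt (fun s => stiefelMomentum (X s) (P s))
      (stiefelMomentum (X t) (quarticForce B (X t) Λ)) t := by
    simpa only [stiefelMomentum_self, zero_add] using hX.stiefelMomentum hP
  have hL := ((hX.stiefelReflection_conj B hXX hXP).add (hΦ.const_smul (2 * lam))).add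
    (.const (lam ^ 2 • B) t)
  rw [add_zero] at hL
  rw [quarticLax_commutator, ← two_smul_stiefelMomentum_quarticForce hB (X t) hΛ, smul_smul,
    mul_comm lam 2]
  exact hL

/-- On the invariant set `XᵀP = PᵀX = 0`, the equations of motion
of the fourth-degree potential system imply the Lax equation
`d/dt L(λ) = [L(λ), A(λ)]` for every `λ ∈ ℝ`. -/
theorem fourth_degree_lax_representation (n r : ℕ)
    (b : Fin n → ℝ) (B : Matrix (Fin n) (Fin n) ℝ) (hB : B = diagonal b) (κ : ℝ)
    (X P : ℝ → Matrix (Fin n) (Fin r) ℝ)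
    (X' P' : Matrix (Fin n) (Fin r) ℝ) (t : ℝ)
    (hX : HasMatDerivAt X X' t) (hP : HasMatDerivAt P P' t)
    (hc1 : (X t)ᵀ * X t = 1)
    (hc2 : (X t)ᵀ * P t = 0) (hc3 : (P t)ᵀ * X t = 0)
    (Λ : Matrix (Fin r) (Fin r) ℝ)
    (hΛ : Λ = (X t)ᵀ * (B * B) * X t
        - (2 : ℝ) • ((X t)ᵀ * B * X t * ((X t)ᵀ * B * X t)) - (P t)ᵀ * P t)
    (heqX : X' = P t - (1 + 2 * κ) • (X t * ((P t)ᵀ * X t)))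
    (heqP : P' = (1 + 2 * κ) • (P t * ((X t)ᵀ * P t)) - B * B * X t
        + (2 : ℝ) • (B * X t * ((X t)ᵀ * B * X t)) + X t * Λ) :
    ∀ lam : ℝ,
      HasMatDerivAt (fun s => quarticLax B (X s) (P s) lam)
        (quarticLax B (X t) (P t) lam * quarticLaxA B (X t) (P t) lam
          - quarticLaxA B (X t) (P t) lam * quarticLax B (X t) (P t) lam) t := by
  subst hB
  exact fourth_degree_lax_representation_general n r _ (isSymm_diagonal b) κ X P X' P' t hX hP
    (by rw [Matrix.mul_assoc, hc1, Matrix.mul_one]) hc2 Λ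
    (hΛ ▸ isSymm_quarticMultiplier (isSymm_diagonal b) (X t) (P t)) heqX heqP
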